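/- There exists a semialgebraic (first-order ring-language definable) bijection from ℚ_p to ℚ_p \ {0}. -/

import Mathlib

/-!
Let `N = φ(p²)` and let `A ⊆ ℤ_p` be the disjoint union of the balls `p ^ k * (1 + p² ℤ_p)`, `k ∈ ℕ`.
Extending by the identity outside `A`, it is enough to find a definable bijection from `A` to
`A ∪ {0}`. Three bijections combine to give it.

* The shift `x ↦ p * x` is a bijection from `A` to `A` minus the ball `1 + p² ℤ_p`
  (`mem_A_iff`), so `A ≅ A ⊔ ℤ_p`.
* `ℤ_p \ {0}` is the disjoint union of `N` multiples `u * A`, one for each unit class modulo `p²`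
  (`exists_coset_form`, `coset_form_inj`).
* As `N + 1` is prime to `p`, Hensel's lemma makes `x ↦ x ^ (N + 1)` a bijection of `1 + p² ℤ_p`,
  hence injective on `A`, and `A` is the disjoint union of the `N + 1` sets
  `p ^ j * A ^ (N + 1)`, `0 ≤ j ≤ N` (`exists_pow_form`, `pow_form_inj`). So `A` is in bijection
  with the union of `A` and `N` further copies of `A`, that is with `A ⊔ (ℤ_p \ {0})`.

Hence `A ≅ A ⊔ ℤ_p = A ⊔ (ℤ_p \ {0}) ⊔ {0} ≅ A ⊔ {0}`. The choice of `N + 1` as exponent, with `N`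
exactly the number of unit classes, is what leaves a single point over, for every `p`.

The graph is definable without parameters: `ℤ_p` is the set of `x` such that `1 + p * x ^ (N + 1)`
is an `(N + 1)`-th power (`integral_iff`), and `A` is the set of integral elements of the subgroup
`p ^ ℤ * (1 + p² ℤ_p)`, a finite union of explicit sets because it contains all nonzero `N`-th
powers (`mem_A_coe_iff`).
-/

namespace NonzeroBij

/-! ### Decompositions of `ℤ_p` into cosets -/

section Arithmetic

variable {p : ℕ} [hp : Fact p.Prime]

/-- The number `N = φ(p²) = p(p-1)` of unit residue classes modulo `p²`. The power map used
throughout is `x ↦ x ^ (N + 1)`. -/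
def idx (p : ℕ) : ℕ := Nat.totient (p ^ 2)

/-- The set `A` of nonzero `p`-adic integers with angular component `1` modulo `p²`, i.e. the
disjoint union of the balls `p ^ k * (1 + p² ℤ_p)` for `k ∈ ℕ`. -/
def A (p : ℕ) [Fact p.Prime] : Set ℤ_[p] :=
  {x | ∃ (k : ℕ) (b : ℤ_[p]), PadicInt.toZModPow 2 b = 1 ∧ x = p ^ k * b}

lemma idx_eq : idx p = p * (p - 1) := by
  simp [idx, Nat.totient_prime_pow hp.out]

lemma two_le_idx : 2 ≤ idx p := by
  rw [idx_eq]
  have := hp.out.two_le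
  have : 1 ≤ p - 1 := by omega
  nlinarith

lemma coprime_idx_succ : p.Coprime (idx p + 1) := by
  rw [idx_eq]; simp

lemma isUnit_of_toZModPow {m : ℕ} (hm : m ≠ 0) {b : ℤ_[p]}
    (h : IsUnit (PadicInt.toZModPow m b)) : IsUnit b := by
  by_contra hb
  rw [PadicInt.not_isUnit_iff, PadicInt.norm_lt_one_iff_dvd] at hb
  obtain ⟨c, rfl⟩ := hb
  rw [map_mul] at h
  have h2 := isUnit_of_mul_isUnit_left h
  have h3 : (PadicInt.toZModPow m (p : ℤ_[p])) ^ m = 0 := by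
    rw [map_natCast, ← Nat.cast_pow, ZMod.natCast_self]
  have : Fact (1 < p ^ m) := ⟨Nat.one_lt_pow hm hp.out.one_lt⟩
  have h4 := h2.pow m
  rw [h3] at h4
  exact not_isUnit_zero h4

lemma isUnit_of_toZModPow_eq_one {b : ℤ_[p]} (h : PadicInt.toZModPow 2 b = 1) : IsUnit b :=
  isUnit_of_toZModPow two_ne_zero (by rw [h]; exact isUnit_one)

lemma toZModPow_eq_one_iff {b : ℤ_[p]} :
    PadicInt.toZModPow 2 b = 1 ↔ ∃ z : ℤ_[p], b = 1 + p ^ 2 * z := by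
  rw [← sub_eq_zero, ← map_one (PadicInt.toZModPow (p := p) 2), ← map_sub, ← RingHom.mem_ker,
    PadicInt.ker_toZModPow, Ideal.mem_span_singleton]
  constructor
  · rintro ⟨z, hz⟩
    exact ⟨z, by linear_combination hz⟩
  · rintro ⟨z, hz⟩
    exact ⟨z, by linear_combination hz⟩

/-- Units raised to the power `N` are `1` modulo `p²`. -/
lemma toZModPow_pow_idx {u : ℤ_[p]} (hu : IsUnit u) :
    PadicInt.toZModPow 2 (u ^ idx p) = 1 := by
  have := ZMod.pow_totient (n := p ^ 2) (Units.map (PadicInt.toZModPow (p := p) 2).toMonoidHom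
    hu.unit)
  have := congrArg Units.val this
  rw [Units.val_pow_eq_pow_val, Units.val_one] at this
  rw [map_pow]
  exact this

/-- Uniqueness of the factorisation into a power of `p` and a unit. -/
lemma pow_mul_unit_inj {k l : ℕ} {b c : ℤ_[p]} (hb : IsUnit b) (hc : IsUnit c)
    (h : (p : ℤ_[p]) ^ k * b = p ^ l * c) : k = l ∧ b = c := by
  have hk : k = l := by
    have h1 := congrArg PadicInt.valuation h
    have v1 : ∀ {d : ℤ_[p]}, IsUnit d → d.valuation = 0 := by
      intro d hd
      have h2 := PadicInt.norm_eq_zpow_neg_valuation hd.ne_zero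
      rw [PadicInt.isUnit_iff.1 hd] at h2
      by_contra h0
      have h3 : ((p : ℝ) ^ (-(d.valuation : ℤ))) < 1 :=
        zpow_lt_one_of_neg₀ (by exact_mod_cast hp.out.one_lt) (by omega)
      linarith
    rwa [PadicInt.valuation_p_pow_mul _ _ hb.ne_zero, PadicInt.valuation_p_pow_mul _ _ hc.ne_zero,
      v1 hb, v1 hc] at h1
  subst hk
  exact ⟨rfl, mul_left_cancel₀ (pow_ne_zero _ (by exact_mod_cast hp.out.ne_zero)) h⟩

/-- Hensel's lemma for `X ^ n - c` at the approximate root `1`, for `n` prime to `p`. -/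
lemma exists_unique_root {n : ℕ} (hn : p.Coprime n) {c : ℤ_[p]} (hc : ‖c - 1‖ < 1) :
    ∃ z : ℤ_[p], z ^ n = c ∧ ‖z - 1‖ < 1 ∧ ∀ z', z' ^ n = c → ‖z' - 1‖ < 1 → z' = z := by
  have hd : ‖Polynomial.aeval (1 : ℤ_[p])
      (Polynomial.derivative (Polynomial.X ^ n - Polynomial.C c))‖ = 1 := by
    simpa [Polynomial.derivative_X_pow] using PadicInt.norm_natCast_eq_one_iff.2 hn
  have := hensels_lemma (p := p) (F := Polynomial.X ^ n - Polynomial.C c) (a := 1) (by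
    rw [hd]; simpa [norm_sub_rev] using hc)
  rw [hd] at this
  obtain ⟨z, h1, h2, -, h3⟩ := this
  simp only [map_sub, map_pow, Polynomial.aeval_X, Polynomial.aeval_C, Algebra.algebraMap_self,
    RingHom.id_apply, sub_eq_zero] at h1 h3
  exact ⟨z, h1, h2, h3⟩

lemma norm_sub_one_lt {b : ℤ_[p]} (h : PadicInt.toZModPow 2 b = 1) : ‖b - 1‖ < 1 := by
  obtain ⟨z, rfl⟩ := toZModPow_eq_one_iff.1 h
  rw [PadicInt.norm_lt_one_iff_dvd]
  exact ⟨p * z, by ring⟩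

/-- The power map `x ↦ x ^ (N + 1)` is injective on the ball `1 + p² ℤ_p`. -/
lemma root_unique {b c : ℤ_[p]} (hb : PadicInt.toZModPow 2 b = 1)
    (hc : PadicInt.toZModPow 2 c = 1) (h : b ^ (idx p + 1) = c ^ (idx p + 1)) : b = c := by
  have h1 : PadicInt.toZModPow 2 (c ^ (idx p + 1)) = 1 := by rw [map_pow, hc, one_pow]
  obtain ⟨z, -, -, hz⟩ := exists_unique_root coprime_idx_succ (norm_sub_one_lt h1)
  rw [hz b h (norm_sub_one_lt hb), hz c rfl (norm_sub_one_lt hc)]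

/-- The power map `x ↦ x ^ (N + 1)` maps the ball `1 + p² ℤ_p` onto itself. -/
lemma root_exists {b : ℤ_[p]} (hb : PadicInt.toZModPow 2 b = 1) :
    ∃ c : ℤ_[p], PadicInt.toZModPow 2 c = 1 ∧ c ^ (idx p + 1) = b := by
  obtain ⟨z, hz, -, -⟩ := exists_unique_root coprime_idx_succ (norm_sub_one_lt hb)
  have hu : IsUnit z := by
    have := isUnit_of_toZModPow_eq_one hb
    rw [← hz] at this
    exact (isUnit_pow_iff (by omega)).1 this
  refine ⟨z, ?_, hz⟩
  -- Since `z ^ N` is `1` modulo `p²`, so is `z`.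
  rw [← hz, pow_succ (M := ℤ_[p]) z, map_mul, toZModPow_pow_idx hu, one_mul] at hb
  exact hb

lemma ne_zero_of_mem_A {x : ℤ_[p]} (hx : x ∈ A p) : x ≠ 0 := by
  obtain ⟨k, b, hb, rfl⟩ := hx
  exact mul_ne_zero (pow_ne_zero _ (by exact_mod_cast hp.out.ne_zero))
    (isUnit_of_toZModPow_eq_one hb).ne_zero

/-- `A` is the union of its subsets `p ^ j * A ^ (N + 1)` for `j ≤ N`. -/
lemma exists_pow_form {x : ℤ_[p]} (hx : x ∈ A p) :
    ∃ j < idx p + 1, ∃ h ∈ A p, x = p ^ j * h ^ (idx p + 1) := by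
  obtain ⟨k, b, hb, rfl⟩ := hx
  obtain ⟨c, hc, rfl⟩ := root_exists hb
  refine ⟨k % (idx p + 1), Nat.mod_lt _ (by omega), _, ⟨k / (idx p + 1), c, hc, rfl⟩, ?_⟩
  rw [mul_pow, ← pow_mul, ← mul_assoc, ← pow_add, mul_comm (k / _), Nat.mod_add_div]

lemma pow_form_mem (j : ℕ) {h : ℤ_[p]} (hh : h ∈ A p) :
    p ^ j * h ^ (idx p + 1) ∈ A p := by
  obtain ⟨k, b, hb, rfl⟩ := hh
  exact ⟨j + k * (idx p + 1), b ^ (idx p + 1), by rw [map_pow, hb, one_pow], by ring⟩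

/-- The sets `p ^ j * A ^ (N + 1)`, `j ≤ N`, are disjoint and parametrised injectively by `A`. -/
lemma pow_form_inj {i j : ℕ} (hi : i < idx p + 1) (hj : j < idx p + 1) {g h : ℤ_[p]}
    (hg : g ∈ A p) (hh : h ∈ A p)
    (e : (p : ℤ_[p]) ^ i * g ^ (idx p + 1) = p ^ j * h ^ (idx p + 1)) : i = j ∧ g = h := by
  obtain ⟨k, b, hb, rfl⟩ := hg
  obtain ⟨l, c, hc, rfl⟩ := hh
  have e' : (p : ℤ_[p]) ^ (i + (idx p + 1) * k) * b ^ (idx p + 1)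
      = p ^ (j + (idx p + 1) * l) * c ^ (idx p + 1) := by
    linear_combination e
  obtain ⟨e1, e2⟩ := pow_mul_unit_inj ((isUnit_of_toZModPow_eq_one hb).pow _)
    ((isUnit_of_toZModPow_eq_one hc).pow _) e'
  have e3 : i = j := by
    have := congrArg (· % (idx p + 1)) e1
    simpa [Nat.mod_eq_of_lt hi, Nat.mod_eq_of_lt hj] using this
  subst e3
  have e4 : k = l := by
    have := Nat.add_left_cancel e1
    exact Nat.eq_of_mul_eq_mul_left (by omega) this
  rw [e4, root_unique hb hc e2]
  exact ⟨rfl, rfl⟩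

lemma toZModPow_val (u : (ZMod (p ^ 2))ˣ) :
    PadicInt.toZModPow 2 ((u : ZMod (p ^ 2)).val : ℤ_[p]) = u := by
  rw [map_natCast, ZMod.natCast_zmod_val]

lemma isUnit_val (u : (ZMod (p ^ 2))ˣ) : IsUnit ((u : ZMod (p ^ 2)).val : ℤ_[p]) :=
  isUnit_of_toZModPow two_ne_zero (by rw [toZModPow_val]; exact u.isUnit)

/-- `ℤ_p \ {0}` is the union of the `N` multiples `u * A`, with `u` running over representatives
of the unit classes modulo `p²`. -/
lemma exists_coset_form {z : ℤ_[p]} (hz : z ≠ 0) :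
    ∃ u : (ZMod (p ^ 2))ˣ, ∃ h ∈ A p, z = (u : ZMod (p ^ 2)).val * h := by
  set w := PadicInt.unitCoeff hz with hw
  let u : (ZMod (p ^ 2))ˣ := Units.map (PadicInt.toZModPow (p := p) 2).toMonoidHom w
  have hu : (u : ZMod (p ^ 2)) = PadicInt.toZModPow 2 (w : ℤ_[p]) := rfl
  obtain ⟨r, hr⟩ := isUnit_val u
  have hr' : PadicInt.toZModPow 2 (r : ℤ_[p]) = u := by rw [hr, toZModPow_val]
  refine ⟨u, _, ⟨z.valuation, w * (r⁻¹ : ℤ_[p]ˣ), ?_, rfl⟩, ?_⟩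
  · rw [map_mul, ← hu, ← hr', ← map_mul, Units.mul_inv, map_one]
  · rw [← hr]
    conv_lhs => rw [PadicInt.unitCoeff_spec hz, ← hw]
    linear_combination (-(w : ℤ_[p]) * p ^ z.valuation) * Units.mul_inv r

lemma coset_form_inj {u v : (ZMod (p ^ 2))ˣ} {g h : ℤ_[p]} (hg : g ∈ A p) (hh : h ∈ A p)
    (e : ((u : ZMod (p ^ 2)).val : ℤ_[p]) * g = (v : ZMod (p ^ 2)).val * h) : u = v ∧ g = h := by
  have e0 := e
  obtain ⟨k, b, hb, rfl⟩ := hg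
  obtain ⟨l, c, hc, rfl⟩ := hh
  rw [mul_left_comm, mul_left_comm _ _ c] at e
  obtain ⟨-, e2⟩ := pow_mul_unit_inj ((isUnit_val u).mul (isUnit_of_toZModPow_eq_one hb))
    ((isUnit_val v).mul (isUnit_of_toZModPow_eq_one hc)) e
  have e3 := congrArg (PadicInt.toZModPow 2) e2
  rw [map_mul, map_mul, hb, hc, toZModPow_val, toZModPow_val, mul_one, mul_one] at e3
  obtain rfl := Units.ext e3
  exact ⟨rfl, mul_left_cancel₀ (isUnit_val u).ne_zero e0⟩

/-- `A` is the union of `p * A` and the ball `1 + p² ℤ_p`. -/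
lemma mem_A_iff {y : ℤ_[p]} :
    y ∈ A p ↔ (∃ x ∈ A p, y = p * x) ∨ ∃ z : ℤ_[p], y = 1 + p ^ 2 * z := by
  constructor
  · rintro ⟨k, b, hb, rfl⟩
    cases k with
    | zero => right; simpa using toZModPow_eq_one_iff.1 hb
    | succ k => left; exact ⟨_, ⟨k, b, hb, rfl⟩, by ring⟩
  · rintro (⟨x, ⟨k, b, hb, rfl⟩, rfl⟩ | h)
    · exact ⟨k + 1, b, hb, by ring⟩
    · exact ⟨0, y, toZModPow_eq_one_iff.2 h, by simp⟩

lemma p_mul_ne (x z : ℤ_[p]) : (p : ℤ_[p]) * x ≠ 1 + p ^ 2 * z := by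
  intro h
  have h1 : IsUnit ((p : ℤ_[p]) * x) :=
    isUnit_of_toZModPow_eq_one (toZModPow_eq_one_iff.2 ⟨z, h⟩)
  exact PadicInt.p_nonunit (isUnit_of_mul_isUnit_left h1)

end Arithmetic

/-! ### The bijection as a relation -/

section Relation

variable {p : ℕ} [hp : Fact p.Prime]

/-- An enumeration of the unit classes modulo `p²` by `0, …, N - 1`. -/
noncomputable def unitsEquiv (p : ℕ) [hp : Fact p.Prime] : (ZMod (p ^ 2))ˣ ≃ Fin (idx p) :=
  haveI : NeZero (p ^ 2) := ⟨pow_ne_zero 2 hp.out.ne_zero⟩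
  Fintype.equivFinOfCardEq (ZMod.card_units_eq_totient _)

/-- The graph of a bijection from `ℤ_p` to the complement of `A ^ (N + 1)` in `A ∪ {0}`: it sends
`0` to `0` and the coset `u * A` to `p ^ (i + 1) * A ^ (N + 1)`, where `i` is the index of `u`. -/
def RelBall (z w : ℤ_[p]) : Prop :=
  (z = 0 ∧ w = 0) ∨ ∃ u : (ZMod (p ^ 2))ˣ, ∃ h ∈ A p,
    z = (u : ZMod (p ^ 2)).val * h ∧ w = p ^ ((unitsEquiv p u : ℕ) + 1) * h ^ (idx p + 1)

/-- The graph of a bijection from `A` to `A ∪ {0}`: on `p * A` it is `p * x ↦ x ^ (N + 1)`, and on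
the ball `1 + p² ℤ_p` it is given by `RelBall` after rescaling to `ℤ_p`. -/
def RelA (y w : ℤ_[p]) : Prop :=
  (∃ x ∈ A p, y = p * x ∧ w = x ^ (idx p + 1)) ∨ ∃ z : ℤ_[p], y = 1 + p ^ 2 * z ∧ RelBall z w

lemma relBall_total (z : ℤ_[p]) : ∃ w, RelBall z w := by
  by_cases hz : z = 0
  · exact ⟨0, Or.inl ⟨hz, rfl⟩⟩
  · obtain ⟨u, h, hh, rfl⟩ := exists_coset_form hz
    exact ⟨_, Or.inr ⟨u, h, hh, rfl, rfl⟩⟩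

lemma exp_lt (u : (ZMod (p ^ 2))ˣ) : (unitsEquiv p u : ℕ) + 1 < idx p + 1 := by
  have := (unitsEquiv p u).2
  omega

lemma val_mul_ne_zero (u : (ZMod (p ^ 2))ˣ) {h : ℤ_[p]} (hh : h ∈ A p) :
    ((u : ZMod (p ^ 2)).val : ℤ_[p]) * h ≠ 0 :=
  mul_ne_zero (isUnit_val u).ne_zero (ne_zero_of_mem_A hh)

lemma relBall_fun {z w w' : ℤ_[p]} (h : RelBall z w) (h' : RelBall z w') : w = w' := by
  rcases h with ⟨rfl, rfl⟩ | ⟨u, h, hh, rfl, rfl⟩ <;>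
    rcases h' with ⟨h0, rfl⟩ | ⟨v, g, hg, h0, rfl⟩
  · rfl
  · exact absurd h0.symm (val_mul_ne_zero v hg)
  · exact absurd h0 (val_mul_ne_zero u hh)
  · obtain ⟨rfl, rfl⟩ := coset_form_inj hh hg h0
    rfl

lemma relBall_inj {z z' w : ℤ_[p]} (h : RelBall z w) (h' : RelBall z' w) : z = z' := by
  rcases h with ⟨rfl, rfl⟩ | ⟨u, h, hh, rfl, rfl⟩ <;>
    rcases h' with ⟨rfl, h0⟩ | ⟨v, g, hg, rfl, h0⟩
  · rfl
  · exact absurd h0.symm (ne_zero_of_mem_A (pow_form_mem _ hg))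
  · exact absurd h0 (ne_zero_of_mem_A (pow_form_mem _ hh))
  · obtain ⟨e1, rfl⟩ := pow_form_inj (exp_lt u) (exp_lt v) hh hg h0
    have : u = v := (unitsEquiv p).injective (Fin.ext (Nat.add_right_cancel e1))
    rw [this]

lemma relBall_ne {z x : ℤ_[p]} (hx : x ∈ A p) : ¬ RelBall z (x ^ (idx p + 1)) := by
  rintro (⟨-, h0⟩ | ⟨u, h, hh, -, h0⟩)
  · exact ne_zero_of_mem_A hx ((pow_eq_zero_iff (by omega)).1 h0)
  · rw [← one_mul (x ^ _), ← pow_zero (p : ℤ_[p])] at h0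
    have := (pow_form_inj (by omega) (exp_lt u) hx hh h0).1
    omega

lemma relA_left {y w : ℤ_[p]} (h : RelA y w) : y ∈ A p := by
  rw [mem_A_iff]
  rcases h with ⟨x, hx, h, -⟩ | ⟨z, h, -⟩
  · exact Or.inl ⟨x, hx, h⟩
  · exact Or.inr ⟨z, h⟩

lemma relA_right {y w : ℤ_[p]} (h : RelA y w) : w ∈ A p ∨ w = 0 := by
  rcases h with ⟨x, hx, -, rfl⟩ | ⟨z, -, ⟨-, rfl⟩ | ⟨u, h, hh, -, rfl⟩⟩
  · exact Or.inl (by simpa using pow_form_mem 0 hx)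
  · exact Or.inr rfl
  · exact Or.inl (pow_form_mem _ hh)

lemma relA_total {y : ℤ_[p]} (hy : y ∈ A p) : ∃ w, RelA y w := by
  rcases mem_A_iff.1 hy with ⟨x, hx, rfl⟩ | ⟨z, rfl⟩
  · exact ⟨_, Or.inl ⟨x, hx, rfl, rfl⟩⟩
  · obtain ⟨w, hw⟩ := relBall_total z
    exact ⟨w, Or.inr ⟨z, rfl, hw⟩⟩

lemma relA_surj {w : ℤ_[p]} (hw : w ∈ A p ∨ w = 0) : ∃ y, RelA y w := by
  rcases hw with hw | rfl
  · obtain ⟨j, hj, h, hh, rfl⟩ := exists_pow_form hw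
    cases j with
    | zero => exact ⟨_, Or.inl ⟨h, hh, rfl, by simp⟩⟩
    | succ j =>
      have hj' : j < idx p := by omega
      exact ⟨_, Or.inr ⟨_, rfl, Or.inr ⟨(unitsEquiv p).symm ⟨j, hj'⟩, h, hh, rfl, by simp⟩⟩⟩
  · exact ⟨_, Or.inr ⟨0, rfl, Or.inl ⟨rfl, rfl⟩⟩⟩

lemma p_ne_zero : (p : ℤ_[p]) ≠ 0 := by exact_mod_cast hp.out.ne_zero

lemma relA_fun {y w w' : ℤ_[p]} (h : RelA y w) (h' : RelA y w') : w = w' := by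
  rcases h with ⟨x, hx, rfl, rfl⟩ | ⟨z, rfl, hz⟩ <;>
    rcases h' with ⟨x', hx', h0, rfl⟩ | ⟨z', h0, hz'⟩
  · rw [mul_left_cancel₀ p_ne_zero h0]
  · exact absurd h0 (p_mul_ne _ _)
  · exact absurd h0.symm (p_mul_ne _ _)
  · obtain rfl := mul_left_cancel₀ (pow_ne_zero 2 p_ne_zero) (add_left_cancel h0)
    exact relBall_fun hz hz'

lemma relA_inj {y y' w : ℤ_[p]} (h : RelA y w) (h' : RelA y' w) : y = y' := by
  rcases h with ⟨x, hx, rfl, rfl⟩ | ⟨z, rfl, hz⟩ <;>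
    rcases h' with ⟨x', hx', rfl, h0⟩ | ⟨z', rfl, hz'⟩
  · rw [(pow_form_inj (i := 0) (j := 0) (by omega) (by omega) hx hx' (by simpa using h0)).2]
  · exact absurd hz' (relBall_ne hx)
  · rw [h0] at hz
    exact absurd hz (relBall_ne hx')
  · rw [relBall_inj hz hz']

/-- The graph of a bijection from `ℚ_p \ {0}` to `ℚ_p`: `RelA` on `A`, the identity elsewhere. -/
def Rel (y w : ℚ_[p]) : Prop :=
  (y ≠ 0 ∧ (¬ ∃ a ∈ A p, y = (a : ℚ_[p])) ∧ w = y) ∨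
    ∃ y' w' : ℤ_[p], y = y' ∧ w = w' ∧ RelA y' w'

lemma rel_ne_zero {y w : ℚ_[p]} (h : Rel y w) : y ≠ 0 := by
  rcases h with h | ⟨y', w', rfl, rfl, h⟩
  · exact h.1
  · simpa using ne_zero_of_mem_A (relA_left h)

lemma rel_total {y : ℚ_[p]} (hy : y ≠ 0) : ∃ w, Rel y w := by
  by_cases h : ∃ a ∈ A p, y = (a : ℚ_[p])
  · obtain ⟨a, ha, rfl⟩ := h
    obtain ⟨w, hw⟩ := relA_total ha
    exact ⟨w, Or.inr ⟨a, w, rfl, rfl, hw⟩⟩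
  · exact ⟨y, Or.inl ⟨hy, h, rfl⟩⟩

lemma rel_surj (w : ℚ_[p]) : ∃ y, Rel y w := by
  by_cases h : ∃ a : ℤ_[p], (a ∈ A p ∨ a = 0) ∧ w = a
  · obtain ⟨a, ha, rfl⟩ := h
    obtain ⟨y, hy⟩ := relA_surj ha
    exact ⟨y, Or.inr ⟨y, a, rfl, rfl, hy⟩⟩
  · refine ⟨w, Or.inl ⟨?_, ?_, rfl⟩⟩
    · rintro rfl
      exact h ⟨0, Or.inr rfl, by simp⟩
    · rintro ⟨a, ha, rfl⟩
      exact h ⟨a, Or.inl ha, rfl⟩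

lemma rel_fun {y w w' : ℚ_[p]} (h : Rel y w) (h' : Rel y w') : w = w' := by
  rcases h with ⟨-, h1, rfl⟩ | ⟨a, b, rfl, rfl, h⟩ <;>
    rcases h' with ⟨-, h2, rfl⟩ | ⟨a', b', h0, rfl, h'⟩
  · rfl
  · exact absurd ⟨a', relA_left h', h0⟩ h1
  · exact absurd ⟨a, relA_left h, rfl⟩ h2
  · obtain rfl := Subtype.coe_injective h0
    rw [relA_fun h h']

lemma rel_inj {y y' w : ℚ_[p]} (h : Rel y w) (h' : Rel y' w) : y = y' := by
  have key : ∀ {y w : ℚ_[p]} {b : ℤ_[p]}, y ≠ 0 → (¬ ∃ a ∈ A p, y = (a : ℚ_[p])) → w = y →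
      w = b → ¬ (b ∈ A p ∨ b = 0) := by
    rintro y w b hy hA rfl rfl (h | rfl)
    · exact hA ⟨b, h, rfl⟩
    · simp at hy
  rcases h with ⟨hy, h1, rfl⟩ | ⟨a, b, rfl, rfl, h⟩ <;>
    rcases h' with ⟨hy', h2, h0⟩ | ⟨a', b', rfl, h0, h'⟩
  · exact h0
  · exact absurd (relA_right h') (key hy h1 rfl h0)
  · exact absurd (relA_right h) (key hy' h2 h0 rfl)
  · obtain rfl := Subtype.coe_injective h0
    rw [relA_inj h h']

end Relation

/-! ### Definable predicates over a commutative ring -/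

section Definability

variable {K : Type*} [CommRing K] {α : Type}

/-- `t` is a polynomial function with integer coefficients, i.e. the interpretation of a term of
the language of rings. -/
def IsPoly (t : (α → K) → K) : Prop :=
  ∃ q : FreeCommRing α, ∀ v, t v = FreeCommRing.lift v q

lemma IsPoly.var (i : α) : IsPoly (fun v : α → K => v i) :=
  ⟨FreeCommRing.of i, fun v => by simp⟩

lemma IsPoly.natCast (m : ℕ) : IsPoly (fun _ : α → K => (m : K)) :=
  ⟨m, fun v => by simp⟩

lemma IsPoly.zero : IsPoly (fun _ : α → K => (0 : K)) := ⟨0, fun v => by simp⟩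

lemma IsPoly.one : IsPoly (fun _ : α → K => (1 : K)) := ⟨1, fun v => by simp⟩

lemma IsPoly.add {s t : (α → K) → K} (hs : IsPoly s) (ht : IsPoly t) :
    IsPoly (fun v => s v + t v) := by
  obtain ⟨q, hq⟩ := hs
  obtain ⟨r, hr⟩ := ht
  exact ⟨q + r, fun v => by simp [hq, hr]⟩

lemma IsPoly.mul {s t : (α → K) → K} (hs : IsPoly s) (ht : IsPoly t) :
    IsPoly (fun v => s v * t v) := by
  obtain ⟨q, hq⟩ := hs
  obtain ⟨r, hr⟩ := ht
  exact ⟨q * r, fun v => by simp [hq, hr]⟩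

lemma IsPoly.pow {s : (α → K) → K} (hs : IsPoly s) (m : ℕ) : IsPoly (fun v => s v ^ m) := by
  obtain ⟨q, hq⟩ := hs
  exact ⟨q ^ m, fun v => by simp [hq]⟩

/-- A polynomial function remains one when a dummy variable is adjoined. -/
lemma IsPoly.weaken {s : (α → K) → K} (hs : IsPoly s) :
    IsPoly (fun v : α ⊕ Unit → K => s (v ∘ Sum.inl)) := by
  obtain ⟨q, hq⟩ := hs
  refine ⟨FreeCommRing.lift (fun a => FreeCommRing.of (Sum.inl a)) q, fun v => ?_⟩
  change s _ = _
  rw [hq]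
  have : FreeCommRing.lift (v ∘ Sum.inl) = (FreeCommRing.lift v).comp
      (FreeCommRing.lift (fun a : α => FreeCommRing.of (Sum.inl a))) := by
    apply FreeCommRing.hom_ext
    intro a
    simp
  rw [this, RingHom.comp_apply]

lemma IsPoly.last : IsPoly (fun v : α ⊕ Unit → K => v (Sum.inr ())) := IsPoly.var _

variable [FirstOrder.Ring.CompatibleRing K]

/-- `P` is first-order definable in the language of rings, without parameters. -/
def Def (P : (α → K) → Prop) : Prop :=
  ∃ φ : FirstOrder.Language.ring.Formula α, ∀ v, φ.Realize v ↔ P v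

lemma Def.eq {s t : (α → K) → K} (hs : IsPoly s) (ht : IsPoly t) : Def (fun v => s v = t v) := by
  obtain ⟨q, hq⟩ := hs
  obtain ⟨r, hr⟩ := ht
  exact ⟨(FirstOrder.Ring.termOfFreeCommRing q).equal (FirstOrder.Ring.termOfFreeCommRing r),
    fun v => by simp [FirstOrder.Language.Formula.realize_equal, hq, hr]⟩

lemma Def.not {P : (α → K) → Prop} (hP : Def P) : Def (fun v => ¬ P v) := by
  obtain ⟨φ, hφ⟩ := hP
  exact ⟨φ.not, fun v => by simp [FirstOrder.Language.Formula.realize_not, hφ]⟩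

lemma Def.and {P Q : (α → K) → Prop} (hP : Def P) (hQ : Def Q) : Def (fun v => P v ∧ Q v) := by
  obtain ⟨φ, hφ⟩ := hP
  obtain ⟨ψ, hψ⟩ := hQ
  exact ⟨φ ⊓ ψ, fun v => by simp [FirstOrder.Language.Formula.realize_inf, hφ, hψ]⟩

lemma Def.or {P Q : (α → K) → Prop} (hP : Def P) (hQ : Def Q) : Def (fun v => P v ∨ Q v) := by
  obtain ⟨φ, hφ⟩ := hP
  obtain ⟨ψ, hψ⟩ := hQ
  exact ⟨φ ⊔ ψ, fun v => by simp [FirstOrder.Language.Formula.realize_sup, hφ, hψ]⟩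

lemma Def.iExists {ι : Type} [Finite ι] {P : ι → (α → K) → Prop} (hP : ∀ i, Def (P i)) :
    Def (fun v => ∃ i, P i v) := by
  choose φ hφ using hP
  exact ⟨FirstOrder.Language.Formula.iSup φ, fun v => by
    simp [FirstOrder.Language.Formula.realize_iSup, hφ]⟩

/-- Quantification over one more variable, with the predicate written in curried form. -/
lemma Def.ex {P : (α → K) → K → Prop}
    (hP : Def (fun v : α ⊕ Unit → K => P (v ∘ Sum.inl) (v (Sum.inr ())))) :
    Def (fun v => ∃ y, P v y) := by
  obtain ⟨φ, hφ⟩ := hP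
  refine ⟨φ.iExs Unit, fun v => ?_⟩
  rw [FirstOrder.Language.Formula.realize_iExs]
  simp only [hφ, Sum.elim_comp_inl, Sum.elim_inr]
  exact ⟨fun ⟨i, h⟩ => ⟨_, h⟩, fun ⟨y, h⟩ => ⟨fun _ => y, h⟩⟩

end Definability

/-! ### Definability of the graph -/

section PadicDefinability

variable {p : ℕ} [hp : Fact p.Prime]

/-- A purely algebraic description of `ℤ_p` inside `ℚ_p`: for `n ≥ 2` prime to `p`, if
`v(x) < 0` then `1 + p * x ^ n` has valuation `1 + n * v(x)`, not a multiple of `n`. -/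
lemma integral_iff (x : ℚ_[p]) :
    (∃ a : ℤ_[p], x = a) ↔ ∃ y, y ^ (idx p + 1) = 1 + p * x ^ (idx p + 1) := by
  constructor
  · rintro ⟨a, rfl⟩
    obtain ⟨z, hz, -, -⟩ := exists_unique_root (p := p) (c := 1 + p * a ^ (idx p + 1))
      coprime_idx_succ (by
        rw [PadicInt.norm_lt_one_iff_dvd]
        exact ⟨a ^ (idx p + 1), by ring⟩)
    exact ⟨z, by exact_mod_cast congrArg (fun t : ℤ_[p] => (t : ℚ_[p])) hz⟩
  · rintro ⟨y, hy⟩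
    by_contra hx
    have hx1 : 1 < ‖x‖ := by
      by_contra h
      exact hx ⟨⟨x, not_lt.1 h⟩, rfl⟩
    have hx0 : x ≠ 0 := by
      rintro rfl
      simp at hx1
      linarith
    have hp1 : (1 : ℝ) < p := by exact_mod_cast hp.out.one_lt
    have hp0 : (p : ℝ) ≠ 0 := by positivity
    have hnx := Padic.norm_eq_zpow_neg_valuation hx0
    have hv : 1 ≤ -x.valuation := by
      rw [hnx] at hx1
      have := (one_lt_zpow_iff_right₀ hp1).1 hx1
      omega
    have hN := two_le_idx (p := p)
    have hnorm : ‖(p : ℚ_[p]) * x ^ (idx p + 1)‖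
        = (p : ℝ) ^ (-x.valuation * ((idx p + 1 : ℕ) : ℤ) - 1) := by
      rw [norm_mul, norm_pow, Padic.norm_p, hnx, zpow_sub₀ hp0, zpow_mul, zpow_natCast, zpow_one]
      field_simp
    have hpos : 0 < -x.valuation * ((idx p + 1 : ℕ) : ℤ) - 1 := by
      have : (2 : ℤ) ≤ idx p := by exact_mod_cast hN
      push_cast
      nlinarith
    have hbig : 1 < ‖(p : ℚ_[p]) * x ^ (idx p + 1)‖ := by
      rw [hnorm]
      exact one_lt_zpow₀ hp1 hpos
    have hsum : ‖y ^ (idx p + 1)‖ = (p : ℝ) ^ (-x.valuation * ((idx p + 1 : ℕ) : ℤ) - 1) := by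
      rw [hy, Padic.add_eq_max_of_ne (by rw [norm_one]; exact hbig.ne), norm_one,
        max_eq_right hbig.le, hnorm]
    have hy0 : y ≠ 0 := by
      rintro rfl
      rw [zero_pow (by omega), norm_zero] at hsum
      exact (zpow_pos (by positivity) _).ne hsum
    rw [norm_pow, Padic.norm_eq_zpow_neg_valuation hy0, ← zpow_natCast, ← zpow_mul] at hsum
    have he := zpow_right_injective₀ (by positivity) hp1.ne' hsum
    have hdvd : ((idx p + 1 : ℕ) : ℤ) ∣ 1 :=
      ⟨-x.valuation + y.valuation, by linear_combination he⟩
    have := Int.le_of_dvd one_pos hdvd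
    push_cast at this
    omega

/-- A first-order description of `A`: the subgroup `p ^ ℤ * (1 + p² ℤ_p)` of `ℚ_p \ {0}` has
finite index, and it is a finite union of sets `p ^ i * (ℚ_p \ {0}) ^ N * (1 + p² ℤ_p)`. -/
lemma mem_A_coe_iff (x : ℚ_[p]) :
    (∃ a ∈ A p, x = (a : ℚ_[p])) ↔ (∃ a : ℤ_[p], x = a) ∧
      ∃ y : ℚ_[p], ¬ y = 0 ∧ ∃ z : ℚ_[p], (∃ c : ℤ_[p], z = c) ∧
        ∃ i : Fin (idx p), x = (p : ℚ_[p]) ^ (i : ℕ) * y ^ idx p * (1 + (p : ℚ_[p]) ^ 2 * z) := by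
  have hN := two_le_idx (p := p)
  have hp0 : (p : ℚ_[p]) ≠ 0 := by exact_mod_cast hp.out.ne_zero
  have hp1 : (1 : ℝ) < p := by exact_mod_cast hp.out.one_lt
  constructor
  · rintro ⟨a, ⟨k, b, hb, rfl⟩, rfl⟩
    obtain ⟨z, rfl⟩ := toZModPow_eq_one_iff.1 hb
    refine ⟨⟨_, rfl⟩, (p : ℚ_[p]) ^ (k / idx p), pow_ne_zero _ hp0, z, ⟨z, rfl⟩,
      ⟨k % idx p, Nat.mod_lt _ (by omega)⟩, ?_⟩
    rw [← pow_mul, ← pow_add, mul_comm (k / _), Nat.mod_add_div]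
    push_cast
    ring
  · rintro ⟨⟨a, rfl⟩, y, hy, -, ⟨c, rfl⟩, i, h⟩
    -- Write `y = p ^ q * u` with `q : ℤ` and `u` a unit of `ℤ_p`.
    set q := y.valuation with hq
    have hu1 : ‖y * (p : ℚ_[p]) ^ (-q)‖ = 1 := by
      rw [norm_mul, Padic.norm_p_zpow, Padic.norm_eq_zpow_neg_valuation hy, ← hq,
        ← zpow_add₀ (by positivity)]
      simp
    let u := PadicInt.mkUnits hu1
    have hu : ((u : ℤ_[p]) : ℚ_[p]) = y * (p : ℚ_[p]) ^ (-q) := PadicInt.mkUnits_eq hu1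
    have hy' : y = (p : ℚ_[p]) ^ q * (u : ℤ_[p]) := by
      rw [hu, zpow_neg]
      field_simp
    let b : ℤ_[p] := (u : ℤ_[p]) ^ idx p * (1 + p ^ 2 * c)
    have hb : PadicInt.toZModPow 2 b = 1 := by
      rw [map_mul, toZModPow_pow_idx u.isUnit, toZModPow_eq_one_iff.2 ⟨c, rfl⟩, one_mul]
    have ha : (a : ℚ_[p]) = (p : ℚ_[p]) ^ ((i : ℤ) + q * idx p) * b := by
      rw [h, zpow_add₀ hp0, zpow_mul, zpow_natCast, zpow_natCast]
      conv_lhs => rw [hy']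
      simp only [b]
      push_cast
      ring
    -- The exponent is nonnegative because `a` is integral.
    have hnn : 0 ≤ (i : ℤ) + q * idx p := by
      have h1 : ‖(a : ℚ_[p])‖ ≤ 1 := a.2
      rw [ha, norm_mul, Padic.norm_p_zpow, PadicInt.padic_norm_e_of_padicInt,
        PadicInt.isUnit_iff.1 (isUnit_of_toZModPow_eq_one hb), mul_one,
        zpow_le_one_iff_right₀ hp1] at h1
      omega
    obtain ⟨k, hk⟩ := Int.eq_ofNat_of_zero_le hnn
    rw [hk, zpow_natCast] at ha
    exact ⟨a, ⟨k, b, hb, Subtype.coe_injective (by push_cast; exact ha)⟩, rfl⟩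

/-- `Rel` with all quantifiers ranging over `ℚ_p`. -/
lemma rel_iff (y w : ℚ_[p]) : Rel y w ↔
    (¬ y = 0 ∧ (¬ ∃ a ∈ A p, y = (a : ℚ_[p])) ∧ w = y) ∨
    ((∃ x : ℚ_[p], (∃ a ∈ A p, x = (a : ℚ_[p])) ∧ y = p * x ∧ w = x ^ (idx p + 1)) ∨
      ∃ z : ℚ_[p], (∃ c : ℤ_[p], z = c) ∧ y = 1 + (p : ℚ_[p]) ^ 2 * z ∧ ((z = 0 ∧ w = 0) ∨
        ∃ u : (ZMod (p ^ 2))ˣ, ∃ h : ℚ_[p], (∃ a ∈ A p, h = (a : ℚ_[p])) ∧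
          z = ((u : ZMod (p ^ 2)).val : ℚ_[p]) * h ∧
          w = (p : ℚ_[p]) ^ ((unitsEquiv p u : ℕ) + 1) * h ^ (idx p + 1))) := by
  rw [Rel]
  refine or_congr Iff.rfl ⟨?_, ?_⟩
  · rintro ⟨_, _, rfl, rfl, ⟨x, hx, rfl, rfl⟩ | ⟨z, rfl, ⟨rfl, rfl⟩ | ⟨u, h, hh, rfl, rfl⟩⟩⟩
    · exact Or.inl ⟨x, ⟨x, hx, rfl⟩, by push_cast; rfl, by push_cast; rfl⟩
    · exact Or.inr ⟨0, ⟨0, by simp⟩, by simp, Or.inl ⟨rfl, by simp⟩⟩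
    · exact Or.inr ⟨_, ⟨(u : ZMod (p ^ 2)).val * h, rfl⟩, by push_cast; rfl,
        Or.inr ⟨u, h, ⟨h, hh, rfl⟩, by push_cast; rfl, by push_cast; rfl⟩⟩
  · rintro (⟨_, ⟨x, hx, rfl⟩, rfl, rfl⟩ |
      ⟨_, ⟨z, rfl⟩, rfl, ⟨h0, rfl⟩ | ⟨u, _, ⟨h, hh, rfl⟩, hz, rfl⟩⟩)
    · exact ⟨p * x, x ^ (idx p + 1), by push_cast; rfl, by push_cast; rfl,
        Or.inl ⟨x, hx, rfl, rfl⟩⟩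
    · exact ⟨1 + p ^ 2 * z, 0, by push_cast; rfl, by simp,
        Or.inr ⟨z, rfl, Or.inl ⟨Subtype.coe_injective (by push_cast; exact h0), rfl⟩⟩⟩
    · exact ⟨1 + p ^ 2 * z, p ^ ((unitsEquiv p u : ℕ) + 1) * h ^ (idx p + 1), by push_cast; rfl,
        by push_cast; rfl, Or.inr ⟨z, rfl, Or.inr ⟨u, h, hh,
        Subtype.coe_injective (by push_cast; exact hz), rfl⟩⟩⟩

variable [FirstOrder.Ring.CompatibleRing ℚ_[p]] {α : Type}

lemma def_integral {t : (α → ℚ_[p]) → ℚ_[p]} (ht : IsPoly t) :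
    Def (fun v => ∃ a : ℤ_[p], t v = a) := by
  simp only [integral_iff]
  exact .ex (.eq (.pow .last _) (.add .one (.mul (.natCast p) (.pow ht.weaken _))))

lemma def_A {t : (α → ℚ_[p]) → ℚ_[p]} (ht : IsPoly t) :
    Def (fun v => ∃ a ∈ A p, t v = (a : ℚ_[p])) := by
  simp only [mem_A_coe_iff]
  refine .and (def_integral ht) (.ex (.and (.not (.eq .last .zero)) (.ex (.and
    (def_integral .last) (.iExists fun i => .eq ht.weaken.weaken (.mul (.mul
      (.pow (.natCast p) _) (.pow (IsPoly.weaken .last) _))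
      (.add .one (.mul (.pow (.natCast p) _) .last))))))))

lemma def_rel {s t : (α → ℚ_[p]) → ℚ_[p]} (hs : IsPoly s) (ht : IsPoly t) :
    Def (fun v => Rel (s v) (t v)) := by
  have : NeZero (p ^ 2) := ⟨pow_ne_zero 2 hp.out.ne_zero⟩
  simp only [rel_iff]
  refine .or (.and (.not (.eq hs .zero)) (.and (.not (def_A hs)) (.eq ht hs))) (.or ?_ ?_)
  · exact .ex (.and (def_A .last) (.and (.eq hs.weaken (.mul (.natCast p) .last))
      (.eq ht.weaken (.pow .last _))))
  · refine .ex (.and (def_integral .last) (.and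
      (.eq hs.weaken (.add .one (.mul (.pow (.natCast p) _) .last)))
      (.or (.and (.eq .last .zero) (.eq ht.weaken .zero)) (.iExists fun u => .ex (.and
        (def_A .last) (.and (.eq (IsPoly.weaken .last) (.mul (.natCast _) .last))
          (.eq ht.weaken.weaken (.mul (.pow (.natCast p) _) (.pow .last _)))))))))

end PadicDefinability

end NonzeroBij

theorem exists_semialgebraic_bijection_to_nonzero {p : ℕ} [Fact p.Prime] :
    letI := FirstOrder.Ring.compatibleRingOfRing ℚ_[p]
    ∃ f : ℚ_[p] → ℚ_[p],
      Function.Injective f ∧ Set.range f = {(0 : ℚ_[p])}ᶜ ∧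
      Set.Definable₂ (Set.univ : Set ℚ_[p]) FirstOrder.Language.ring
        {q : ℚ_[p] × ℚ_[p] | f q.1 = q.2} := by
  letI := FirstOrder.Ring.compatibleRingOfRing ℚ_[p]
  choose f hf using NonzeroBij.rel_surj (p := p)
  refine ⟨f, fun w w' h => NonzeroBij.rel_fun (hf w) (h ▸ hf w'), ?_, ?_⟩
  · ext y
    constructor
    · rintro ⟨w, rfl⟩
      exact NonzeroBij.rel_ne_zero (hf w)
    · intro hy
      obtain ⟨w, hw⟩ := NonzeroBij.rel_total hy
      exact ⟨w, NonzeroBij.rel_inj (hf w) hw⟩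
  · obtain ⟨φ, hφ⟩ := NonzeroBij.def_rel (p := p) (α := Fin 2) (.var 1) (.var 0)
    refine Set.Definable.mono (Set.empty_definable_iff.2 ⟨φ, ?_⟩) (Set.empty_subset _)
    ext v
    refine Iff.trans ?_ (hφ v).symm
    change f (v 0) = v 1 ↔ _
    exact ⟨fun h => by
      have := hf (v 0)
      rwa [h] at this, fun h => NonzeroBij.rel_inj (hf _) h⟩
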